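/- arXiv:math-ph/0602017 — 5 statements merged into one kernel-verified Lean document; each statement's English description precedes it below -/
import Mathlib

section
/- With the notation of the context, the function h is (complex-)differentiable at z and satisfies h(z) = 1 and h'(z) = 0. (This is the algebraic content of the vanishing of the first-order term in the diagonal expansion of the Szegő kernel S[e_m] of Corollary 4.2, equivalently of the vanishing (3.10)/(4.15) of all first partial derivatives of θ[e_m] at 0.) -/
open Finset

theorem aux_prod {K : Type*} [DecidableEq K] (lam : K → ℂ) (z : ℂ) (hz : ∀ k, z ≠ lam k)
    (c : ℂ) (S : Finset K) :
    (∏ i ∈ S, ((z - lam i) / (z - lam i)) ^ c) = 1 ∧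
    HasDerivAt (fun w => ∏ i ∈ S, ((z - lam i) / (w - lam i)) ^ c)
      (c * ∑ i ∈ S, -(z - lam i)⁻¹) z := by
  have hne : ∀ k, z - lam k ≠ 0 := fun k => sub_ne_zero.mpr (hz k)
  have h1 : ∀ T : Finset K, (∏ i ∈ T, ((z - lam i) / (z - lam i)) ^ c) = 1 := by
    intro T
    refine Finset.prod_eq_one fun i _ => ?_
    rw [div_self (hne i), Complex.one_cpow]
  refine ⟨h1 S, ?_⟩
  induction S using Finset.induction_on with
  | empty => simpa using hasDerivAt_const z (1 : ℂ)
  | insert k T hk ih =>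
    have hd : HasDerivAt (fun w => (z - lam k) / (w - lam k)) (-(z - lam k)⁻¹) z := by
      have := (hasDerivAt_const z (z - lam k)).div ((hasDerivAt_id z).sub_const (lam k)) (hne k)
      refine this.congr_deriv ?_
      have := hne k
      simp only [id]
      field_simp
      ring
    have hs : HasDerivAt (fun w => ((z - lam k) / (w - lam k)) ^ c) (c * -(z - lam k)⁻¹) z := by
      have := hd.cpow_const (c := c) (by rw [div_self (hne k)]; exact Complex.one_mem_slitPlane)
      refine this.congr_deriv ?_
      rw [div_self (hne k), Complex.one_cpow]
      ring
    have hm := hs.mul ih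
    have he : (fun w => ∏ i ∈ insert k T, ((z - lam i) / (w - lam i)) ^ c) =
        (fun w => ((z - lam k) / (w - lam k)) ^ c) *
          (fun w => ∏ i ∈ T, ((z - lam i) / (w - lam i)) ^ c) := by
      funext w
      simp [Finset.prod_insert hk]
    rw [he]
    refine hm.congr_deriv ?_
    rw [h1 T, div_self (hne k), Complex.one_cpow, Finset.sum_insert hk]
    ring

theorem aux_sum_a (N : ℕ) (hN : 2 ≤ N) :
    ∑ s ∈ Finset.range N, (((N : ℝ) - 1) / (2 * N) - (s : ℝ) / N) = 0 := by
  have hg : ∀ n : ℕ, ∑ s ∈ Finset.range n, (s : ℝ) = n * (n - 1) / 2 := by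
    intro n
    induction n with
    | zero => simp
    | succ n ih => rw [Finset.sum_range_succ, ih]; push_cast; ring
  have : (N : ℝ) ≠ 0 := by positivity
  rw [Finset.sum_sub_distrib, ← Finset.sum_div _ (fun s : ℕ => (s : ℝ)), hg]
  simp
  field_simp
  ring

theorem aux_sum_b (N : ℕ) (hN : 2 ≤ N) :
    ∑ s ∈ Finset.range N, (((N : ℝ) - 1) / (2 * N) - Int.fract (((s : ℝ) + 1) / N)) = 0 := by
  rw [← aux_sum_a N hN, Finset.sum_sub_distrib, Finset.sum_sub_distrib]
  congr 1
  obtain ⟨M, rfl⟩ : ∃ M, N = M + 1 := ⟨N - 1, by omega⟩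
  rw [Finset.sum_range_succ, Finset.sum_range_succ']
  congr 1
  · refine Finset.sum_congr rfl fun s hs => ?_
    have hs' : s < M := Finset.mem_range.mp hs
    push_cast
    rw [Int.fract_eq_self]
    refine ⟨by positivity, ?_⟩
    rw [div_lt_one (by positivity)]
    have : (s : ℝ) < M := by exact_mod_cast hs'
    linarith
  · push_cast
    rw [div_self (by positivity)]
    simp

/-- Diagonal expansion of the algebraic Szegő kernel `S[e_m]` (Corollary 4.2):
the stripped kernel `h` satisfies `h z = 1` and `h' z = 0`, which is the
vanishing of all first partial derivatives of `θ[e_m]` at `0`. -/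
theorem szego_em_value_and_first_deriv
    {K : Type*} [Fintype K] [DecidableEq K]
    (N : ℕ) (hN : 2 ≤ N)
    (lam : K → ℂ) (hlam : Function.Injective lam)
    (I₁ I₂ J₁ J₂ : Finset K)
    (h12 : Disjoint I₁ I₂) (h1J1 : Disjoint I₁ J₁) (h1J2 : Disjoint I₁ J₂)
    (h2J1 : Disjoint I₂ J₁) (h2J2 : Disjoint I₂ J₂) (hJ12 : Disjoint J₁ J₂)
    (z : ℂ) (hz : ∀ k, z ≠ lam k)
    (a b : ℕ → ℝ)
    (ha : ∀ s, a s = ((N : ℝ) - 1) / (2 * N) - (s : ℝ) / N)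
    (hb : ∀ s, b s = ((N : ℝ) - 1) / (2 * N) - Int.fract (((s : ℝ) + 1) / N))
    (h : ℂ → ℂ)
    (hh : ∀ w, h w = (N : ℂ)⁻¹ * ∑ s ∈ Finset.range N,
      (∏ i ∈ I₁, ((z - lam i) / (w - lam i)) ^ ((a s : ℝ) : ℂ)) *
      (∏ j ∈ J₂, ((z - lam j) / (w - lam j)) ^ ((-(a s) : ℝ) : ℂ)) *
      (∏ i ∈ I₂, ((z - lam i) / (w - lam i)) ^ ((b s : ℝ) : ℂ)) *
      (∏ j ∈ J₁, ((z - lam j) / (w - lam j)) ^ ((-(b s) : ℝ) : ℂ))) :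
    h z = 1 ∧ HasDerivAt h 0 z := by
  have hN0 : (N : ℂ) ≠ 0 := by
    have : N ≠ 0 := by omega
    exact_mod_cast this
  have hsa : ∑ s ∈ Finset.range N, ((a s : ℝ) : ℂ) = 0 := by
    rw [← Complex.ofReal_sum, Finset.sum_congr rfl fun s _ => ha s, aux_sum_a N hN]
    simp
  have hsb : ∑ s ∈ Finset.range N, ((b s : ℝ) : ℂ) = 0 := by
    rw [← Complex.ofReal_sum, Finset.sum_congr rfl fun s _ => hb s, aux_sum_b N hN]
    simp
  have P := aux_prod lam z hz
  constructor
  · rw [hh]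
    simp only [(P _ _).1]
    simp [hN0]
  · rw [funext hh]
    have key := (HasDerivAt.fun_sum (u := Finset.range N) fun s _ =>
      ((((P ((a s : ℝ) : ℂ) I₁).2.fun_mul (P ((-(a s) : ℝ) : ℂ) J₂).2).fun_mul
        (P ((b s : ℝ) : ℂ) I₂).2).fun_mul (P ((-(b s) : ℝ) : ℂ) J₁).2)).const_mul (N : ℂ)⁻¹
    refine key.congr_deriv ?_
    simp only [(P _ _).1, one_mul, mul_one, Finset.sum_add_distrib, ← Finset.sum_mul,
      Complex.ofReal_neg, Finset.sum_neg_distrib, hsa, hsb]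
    simp
end

section
/- With the notation of the context, h is twice (complex-)differentiable at z and its second derivative satisfies h''(z) = 2·φ(z), where φ(z) = ((N²−1)/(24N²))·(F₁² + F₂²) + ((N−1)(N−5)/(12N²))·F₁·F₂, with F₁ = Σ_{i∈I₁} (z − λ_i)^{−1} − Σ_{j∈J₂} (z − λ_j)^{−1} and F₂ = Σ_{i∈I₂} (z − λ_i)^{−1} − Σ_{j∈J₁} (z − λ_j)^{−1}. (This is the second-order coefficient φ[e_m] in the diagonal expansion of the Szegő kernel, Corollary 4.2 of the paper, in the coordinate x = λ where the Schwarzian term vanishes.) -/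
open Finset

/-- Second-order jet of `f` at `z`, normalised by `f z = 1`, in logarithmic form. -/
def LogJet (z : ℂ) (f : ℂ → ℂ) (L M : ℂ) : Prop :=
  f z = 1 ∧ ∃ f' : ℂ → ℂ, (∀ᶠ w in nhds z, HasDerivAt f (f' w) w) ∧ f' z = L ∧
    HasDerivAt f' (L ^ 2 + M) z

lemma LogJet.one (z : ℂ) : LogJet z (fun _ => 1) 0 0 := by
  refine ⟨rfl, fun _ => 0, Filter.Eventually.of_forall fun w => hasDerivAt_const w 1, rfl, ?_⟩
  simpa using hasDerivAt_const z (0 : ℂ)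

lemma LogJet.mul {z : ℂ} {f g : ℂ → ℂ} {L M L' M' : ℂ}
    (hf : LogJet z f L M) (hg : LogJet z g L' M') :
    LogJet z (fun w => f w * g w) (L + L') (M + M') := by
  obtain ⟨f0, f', f1, f2, f3⟩ := hf
  obtain ⟨g0, g', g1, g2, g3⟩ := hg
  refine ⟨by simp [f0, g0], fun w => f' w * g w + f w * g' w, ?_, by simp [f0, g0, f2, g2], ?_⟩
  · filter_upwards [f1, g1] with w hw hw'
    exact hw.mul hw'
  · have := (f3.mul g1.self_of_nhds).add (f1.self_of_nhds.mul g3)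
    refine this.congr_deriv ?_
    rw [f0, g0, f2, g2]; ring

lemma LogJet.prod {K : Type*} {z : ℂ} (s : Finset K) {f : K → ℂ → ℂ} {L M : K → ℂ}
    (hf : ∀ k, LogJet z (f k) (L k) (M k)) :
    LogJet z (fun w => ∏ k ∈ s, f k w) (∑ k ∈ s, L k) (∑ k ∈ s, M k) := by
  classical
  induction s using Finset.induction_on with
  | empty => simpa using LogJet.one z
  | insert a s ha ih =>
    simp only [Finset.prod_insert ha, Finset.sum_insert ha]
    exact (hf a).mul ih

lemma LogJet.factor {z l : ℂ} (hz : z ≠ l) (c : ℂ) :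
    LogJet z (fun w => ((z - l) / (w - l)) ^ c) (-c * (z - l)⁻¹) (c * ((z - l)⁻¹) ^ 2) := by
  have hzl : z - l ≠ 0 := sub_ne_zero.2 hz
  have key : ∀ᶠ w in nhds z, HasDerivAt (fun w => ((z - l) / (w - l)) ^ c)
      (-c * (((z - l) / (w - l)) ^ c * (w - l)⁻¹)) w := by
    have hc : ContinuousAt (fun w : ℂ => (z - l) / (w - l)) z := by
      apply ContinuousAt.div <;> first | fun_prop | exact hzl
    have h1 : ∀ᶠ w in nhds z, (z - l) / (w - l) ∈ Complex.slitPlane := by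
      apply hc.eventually_mem
      apply Complex.isOpen_slitPlane.mem_nhds
      rw [div_self hzl]; exact Complex.one_mem_slitPlane
    have h2 : ∀ᶠ w in nhds z, w ≠ l := isOpen_ne.mem_nhds hz
    filter_upwards [h1, h2] with w hw hwl
    have hwl' : w - l ≠ 0 := sub_ne_zero.2 hwl
    have hd : HasDerivAt (fun w : ℂ => (z - l) / (w - l)) (-(z - l) / (w - l) ^ 2) w := by
      have := (hasDerivAt_const w (z - l)).div ((hasDerivAt_id w).sub_const l) hwl'
      refine this.congr_deriv ?_
      simp
    refine (hd.cpow_const hw).congr_deriv ?_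
    rw [Complex.cpow_sub _ _ (div_ne_zero hzl hwl'), Complex.cpow_one]
    field_simp
  refine ⟨by simp [hzl], _, key, by simp [hzl], ?_⟩
  have hi : HasDerivAt (fun w : ℂ => (w - l)⁻¹) (-1 / (z - l) ^ 2) z :=
    ((hasDerivAt_id z).sub_const l).inv hzl
  refine ((key.self_of_nhds.mul hi).const_mul (-c)).congr_deriv ?_
  simp [hzl]
  field_simp
  ring

lemma LogJet.block {K : Type*} {z : ℂ} (lam : K → ℂ) (hz : ∀ k, z ≠ lam k) (s : Finset K) (c : ℂ) :
    LogJet z (fun w => ∏ k ∈ s, ((z - lam k) / (w - lam k)) ^ c)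
      (-c * ∑ k ∈ s, (z - lam k)⁻¹) (c * ∑ k ∈ s, ((z - lam k)⁻¹) ^ 2) := by
  have := LogJet.prod s (fun k => LogJet.factor (hz k) c)
  simpa only [Finset.mul_sum] using this

lemma sum_lin (n : ℕ) : ∑ s ∈ Finset.range n, (s : ℂ) = n * (n - 1) / 2 := by
  induction n with
  | zero => simp
  | succ n ih => rw [Finset.sum_range_succ, ih]; push_cast; ring

lemma sum_sq (n : ℕ) : ∑ s ∈ Finset.range n, (s : ℂ) ^ 2 = n * (n - 1) * (2 * n - 1) / 6 := by
  induction n with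
  | zero => simp
  | succ n ih => rw [Finset.sum_range_succ, ih]; push_cast; ring

/-- Power sums of the exponents. -/
lemma exponent_sums (N : ℕ) (hN : 2 ≤ N) (a b : ℕ → ℝ)
    (ha : ∀ s, a s = ((N : ℝ) - 1) / (2 * N) - (s : ℝ) / N)
    (hb : ∀ s, b s = ((N : ℝ) - 1) / (2 * N) - Int.fract (((s : ℝ) + 1) / N)) :
    ∑ s ∈ Finset.range N, (a s : ℂ) = 0 ∧ ∑ s ∈ Finset.range N, (b s : ℂ) = 0 ∧
    ∑ s ∈ Finset.range N, (a s : ℂ) ^ 2 = ((N : ℂ) ^ 2 - 1) / (12 * N) ∧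
    ∑ s ∈ Finset.range N, (b s : ℂ) ^ 2 = ((N : ℂ) ^ 2 - 1) / (12 * N) ∧
    ∑ s ∈ Finset.range N, (a s : ℂ) * (b s : ℂ) = ((N : ℂ) - 1) * (N - 5) / (12 * N) := by
  obtain ⟨n, rfl⟩ : ∃ n, N = n + 1 := ⟨N - 1, by omega⟩
  have hn0 : (n : ℂ) + 1 ≠ 0 := by exact_mod_cast Nat.succ_ne_zero n
  have hnR : (n : ℝ) + 1 ≠ 0 := by positivity
  have ha' : ∀ s, (a s : ℂ) = n / (2 * (n + 1)) - (s : ℂ) / (n + 1) := by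
    intro s; rw [ha]; push_cast; ring
  have hb' : ∀ s ∈ Finset.range n, (b s : ℂ) = n / (2 * (n + 1)) - ((s : ℂ) + 1) / (n + 1) := by
    intro s hs
    have hs := Finset.mem_range.1 hs
    have : Int.fract (((s : ℝ) + 1) / ((n + 1 : ℕ) : ℝ)) = ((s : ℝ) + 1) / ((n + 1 : ℕ) : ℝ) := by
      rw [Int.fract_eq_self]
      refine ⟨by positivity, ?_⟩
      rw [div_lt_one (by positivity)]
      exact_mod_cast Nat.succ_lt_succ hs
    rw [hb, this]; push_cast; ring
  have hbn : (b n : ℂ) = n / (2 * (n + 1)) := by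
    have : ((n : ℝ) + 1) / ((n + 1 : ℕ) : ℝ) = 1 := by
      push_cast; exact div_self hnR
    rw [hb, this, Int.fract_one]; push_cast; ring
  have e1 := sum_lin n
  have e2 := sum_sq n
  have hgen : ∀ p q r : ℂ, ∑ s ∈ Finset.range n, (p * (s : ℂ) ^ 2 + q * s + r)
      = p * (n * (n - 1) * (2 * n - 1) / 6) + q * (n * (n - 1) / 2) + n * r := by
    intro p q r
    rw [Finset.sum_add_distrib, Finset.sum_add_distrib, ← Finset.mul_sum, ← Finset.mul_sum, e1, e2]
    simp
  set d : ℂ := n / (2 * (n + 1)) with hd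
  set u : ℂ := ((n : ℂ) + 1)⁻¹ with hu
  have A : ∀ s, (a s : ℂ) = d - s * u := fun s => by rw [ha', div_eq_mul_inv]
  have B : ∀ s ∈ Finset.range n, (b s : ℂ) = d - (s + 1) * u := fun s hs => by
    rw [hb' s hs, div_eq_mul_inv]
  refine ⟨?_, ?_, ?_, ?_, ?_⟩ <;> rw [Finset.sum_range_succ]
  · rw [Finset.sum_congr rfl (fun s hs => show (a s : ℂ) = 0 * (s : ℂ) ^ 2 + (-u) * s + d by
      rw [A]; ring), hgen, A, hd, hu]
    field_simp; ring
  · rw [Finset.sum_congr rfl (fun s hs => show (b s : ℂ) = 0 * (s : ℂ) ^ 2 + (-u) * s + (d - u) by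
      rw [B s hs]; ring), hgen, hbn, hd, hu]
    field_simp; ring
  · rw [Finset.sum_congr rfl (fun s hs => show (a s : ℂ) ^ 2 =
      u ^ 2 * (s : ℂ) ^ 2 + (-2 * u * d) * s + d ^ 2 by rw [A]; ring), hgen, A, hd, hu]
    push_cast; field_simp; ring
  · rw [Finset.sum_congr rfl (fun s hs => show (b s : ℂ) ^ 2 =
      u ^ 2 * (s : ℂ) ^ 2 + (-2 * u * (d - u)) * s + (d - u) ^ 2 by rw [B s hs]; ring), hgen,
      hbn, hd, hu]
    push_cast; field_simp; ring
  · rw [Finset.sum_congr rfl (fun s hs => show (a s : ℂ) * b s =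
      u ^ 2 * (s : ℂ) ^ 2 + (-u * (d - u) - u * d) * s + d * (d - u) by rw [A, B s hs]; ring), hgen,
      A, hbn, hd, hu]
    push_cast; field_simp; ring

/-- Second-order coefficient in the diagonal expansion of the algebraic Szegő
kernel `S[e_m]` (Corollary 4.2): `h` is twice differentiable at `z` and
`h'' z = 2 φ[e_m](z)` in the coordinate `x = λ`. -/
theorem szego_em_second_deriv
    {K : Type*} [Fintype K] [DecidableEq K]
    (N : ℕ) (hN : 2 ≤ N)
    (lam : K → ℂ) (hlam : Function.Injective lam)
    (I₁ I₂ J₁ J₂ : Finset K)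
    (h12 : Disjoint I₁ I₂) (h1J1 : Disjoint I₁ J₁) (h1J2 : Disjoint I₁ J₂)
    (h2J1 : Disjoint I₂ J₁) (h2J2 : Disjoint I₂ J₂) (hJ12 : Disjoint J₁ J₂)
    (z : ℂ) (hz : ∀ k, z ≠ lam k)
    (a b : ℕ → ℝ)
    (ha : ∀ s, a s = ((N : ℝ) - 1) / (2 * N) - (s : ℝ) / N)
    (hb : ∀ s, b s = ((N : ℝ) - 1) / (2 * N) - Int.fract (((s : ℝ) + 1) / N))
    (h : ℂ → ℂ)
    (hh : ∀ w, h w = (N : ℂ)⁻¹ * ∑ s ∈ Finset.range N,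
      (∏ i ∈ I₁, ((z - lam i) / (w - lam i)) ^ ((a s : ℝ) : ℂ)) *
      (∏ j ∈ J₂, ((z - lam j) / (w - lam j)) ^ ((-(a s) : ℝ) : ℂ)) *
      (∏ i ∈ I₂, ((z - lam i) / (w - lam i)) ^ ((b s : ℝ) : ℂ)) *
      (∏ j ∈ J₁, ((z - lam j) / (w - lam j)) ^ ((-(b s) : ℝ) : ℂ)))
    (F₁ F₂ : ℂ)
    (hF₁ : F₁ = (∑ i ∈ I₁, (z - lam i)⁻¹) - ∑ j ∈ J₂, (z - lam j)⁻¹)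
    (hF₂ : F₂ = (∑ i ∈ I₂, (z - lam i)⁻¹) - ∑ j ∈ J₁, (z - lam j)⁻¹) :
    (∀ᶠ w in nhds z, DifferentiableAt ℂ h w) ∧
    DifferentiableAt ℂ (deriv h) z ∧
    deriv (deriv h) z =
      2 * ((((N : ℂ) ^ 2 - 1) / (24 * (N : ℂ) ^ 2)) * (F₁ ^ 2 + F₂ ^ 2) +
        (((N : ℂ) - 1) * ((N : ℂ) - 5) / (12 * (N : ℂ) ^ 2)) * F₁ * F₂) := by
  obtain ⟨sa, sb, saa, sbb, sab⟩ := exponent_sums N hN a b ha hb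
  have hN0 : (N : ℂ) ≠ 0 := by
    have : N ≠ 0 := by omega
    exact_mod_cast this
  have hjet := fun s => ((((LogJet.block lam hz I₁ ((a s : ℝ) : ℂ)).mul
    (LogJet.block lam hz J₂ ((-(a s) : ℝ) : ℂ))).mul
    (LogJet.block lam hz I₂ ((b s : ℝ) : ℂ))).mul
    (LogJet.block lam hz J₁ ((-(b s) : ℝ) : ℂ))).2
  choose f' f1 f2 f3 using hjet
  have hd : ∀ᶠ w in nhds z, HasDerivAt h ((N : ℂ)⁻¹ * ∑ s ∈ Finset.range N, f' s w) w := by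
    have : ∀ᶠ w in nhds z, ∀ s ∈ Finset.range N, _ :=
      (Filter.eventually_all_finset (Finset.range N)).2 fun s _ => f1 s
    filter_upwards [this] with w hw
    rw [funext hh]
    exact (HasDerivAt.fun_sum hw).const_mul _
  have hdd := ((HasDerivAt.fun_sum (u := Finset.range N) fun s _ => f3 s).const_mul
    ((N : ℂ)⁻¹)).congr_of_eventuallyEq (hd.mono fun w hw => hw.deriv)
  refine ⟨hd.mono fun w hw => hw.differentiableAt, hdd.differentiableAt, ?_⟩
  rw [hdd.deriv]
  set G₁ : ℂ := (∑ i ∈ I₁, ((z - lam i)⁻¹) ^ 2) - ∑ j ∈ J₂, ((z - lam j)⁻¹) ^ 2 with hG₁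
  set G₂ : ℂ := (∑ i ∈ I₂, ((z - lam i)⁻¹) ^ 2) - ∑ j ∈ J₁, ((z - lam j)⁻¹) ^ 2 with hG₂
  rw [Finset.sum_congr rfl (g := fun s => (a s : ℂ) ^ 2 * F₁ ^ 2 + (b s : ℂ) ^ 2 * F₂ ^ 2 +
    ((a s : ℂ) * b s) * (2 * F₁ * F₂) + (a s : ℂ) * G₁ + (b s : ℂ) * G₂)
    (fun s _ => by rw [hF₁, hF₂, hG₁, hG₂]; push_cast; ring)]
  simp only [Finset.sum_add_distrib, ← Finset.sum_mul]
  rw [sa, sb, saa, sbb, sab]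
  field_simp
  ring
end

section
/- With the notation of the context, h₀ is twice (complex-)differentiable at z and satisfies h₀(z) = 1, h₀'(z) = 0, and h₀''(z) = ((N²−1)/(12N²)) · ( p'(z)/p(z) − q'(z)/q(z) )². (This is the diagonal expansion of the Szegő kernel with zero characteristics, formula (4.12) and the expression for φ[0] following Corollary 4.2.) -/
open Finset

theorem szego_aux_sum1 (N : ℕ) (c d : ℂ) :
    ∑ s ∈ Finset.range N, (c - (s : ℂ) * d) = N * c - d * (N * (N - 1) / 2) := by
  induction N with
  | zero => simp
  | succ n ih => rw [Finset.sum_range_succ, ih]; push_cast; ring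

theorem szego_aux_sum2 (N : ℕ) (c d : ℂ) :
    ∑ s ∈ Finset.range N, (c - (s : ℂ) * d) ^ 2 =
      N * c ^ 2 - 2 * c * d * (N * (N - 1) / 2) + d ^ 2 * ((N - 1) * N * (2 * N - 1) / 6) := by
  induction N with
  | zero => simp
  | succ n ih => rw [Finset.sum_range_succ, ih]; push_cast; ring

/-- The general calculus statement: chain rule for a sum of powers. -/
theorem szego_aux_calc (N : ℕ) (b : ℕ → ℂ) (R : ℂ → ℂ) (z : ℂ) (hR : AnalyticAt ℂ R z)
    (hRz : R z = 1) (h : ℂ → ℂ)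
    (hh : ∀ w, h w = (N : ℂ)⁻¹ * ∑ s ∈ Finset.range N, R w ^ b s) :
    AnalyticAt ℂ h z ∧
    deriv h z = (N : ℂ)⁻¹ * ∑ s ∈ Finset.range N, b s * deriv R z ∧
    deriv (deriv h) z = (N : ℂ)⁻¹ * ∑ s ∈ Finset.range N,
      (b s * (b s - 1) * deriv R z ^ 2 + b s * deriv (deriv R) z) := by
  have hsl : R z ∈ Complex.slitPlane := by rw [hRz]; exact Complex.one_mem_slitPlane
  have hev : ∀ᶠ w in nhds z, R w ∈ Complex.slitPlane :=
    hR.continuousAt.eventually (Complex.isOpen_slitPlane.mem_nhds hsl)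
  have hfun : h = fun w => (N : ℂ)⁻¹ * ∑ s ∈ Finset.range N, R w ^ b s := funext hh
  have hd : ∀ᶠ w in nhds z, HasDerivAt h
      ((N : ℂ)⁻¹ * ∑ s ∈ Finset.range N, b s * R w ^ (b s - 1) * deriv R w) w := by
    filter_upwards [hev, hR.eventually_analyticAt] with w hw hRw
    rw [hfun]
    exact (HasDerivAt.fun_sum fun s _ =>
      hRw.differentiableAt.hasDerivAt.cpow_const hw).const_mul _
  have hd1 : deriv h =ᶠ[nhds z] fun w =>
      (N : ℂ)⁻¹ * ∑ s ∈ Finset.range N, b s * R w ^ (b s - 1) * deriv R w := by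
    filter_upwards [hd] with w hw using hw.deriv
  refine ⟨?_, ?_, ?_⟩
  · rw [Complex.analyticAt_iff_eventually_differentiableAt]
    filter_upwards [hd] with w hw using hw.differentiableAt
  · rw [hd1.eq_of_nhds]
    simp [hRz]
  · rw [hd1.deriv_eq]
    have h2 : HasDerivAt (fun w =>
      (N : ℂ)⁻¹ * ∑ s ∈ Finset.range N, b s * R w ^ (b s - 1) * deriv R w) _ z :=
      (HasDerivAt.fun_sum fun s _ =>
        ((hR.differentiableAt.hasDerivAt.cpow_const hsl (c := b s - 1)).const_mul (b s)).mul
          hR.deriv.differentiableAt.hasDerivAt).const_mul _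
    rw [h2.deriv]
    congr 1
    refine Finset.sum_congr rfl fun s _ => ?_
    simp only [hRz, Complex.one_cpow]
    ring

/-- Diagonal expansion of the algebraic Szegő kernel with zero characteristics
(formula (4.12) and `φ[0]` after Corollary 4.2): `h₀ z = 1`, `h₀' z = 0` and
`h₀'' z = ((N²−1)/(12N²)) (p'/p − q'/q)²(z)`. -/
theorem szego_zero_char_expansion
    (N m : ℕ) (hN : 2 ≤ N) (hm : 1 ≤ m)
    (lam : ℕ → ℂ)
    (hlam : ∀ i j, 1 ≤ i → i ≤ 2 * m + 1 → 1 ≤ j → j ≤ 2 * m + 1 → i ≠ j →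
      lam i ≠ lam j)
    (p q : ℂ → ℂ)
    (hp : ∀ w, p w = ∏ k ∈ Finset.range (m + 1), (w - lam (2 * k + 1)))
    (hq : ∀ w, q w = ∏ k ∈ Finset.Icc 1 m, (w - lam (2 * k)))
    (z : ℂ) (hz : ∀ k, 1 ≤ k → k ≤ 2 * m + 1 → z ≠ lam k)
    (a : ℕ → ℝ)
    (ha : ∀ s, a s = ((N : ℝ) - 1) / (2 * N) - (s : ℝ) / N)
    (h₀ : ℂ → ℂ)
    (hh₀ : ∀ w, h₀ w = (N : ℂ)⁻¹ * ∑ s ∈ Finset.range N,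
      ((q w * p z) / (p w * q z)) ^ ((a s : ℝ) : ℂ)) :
    (∀ᶠ w in nhds z, DifferentiableAt ℂ h₀ w) ∧
    DifferentiableAt ℂ (deriv h₀) z ∧
    h₀ z = 1 ∧ deriv h₀ z = 0 ∧
    deriv (deriv h₀) z =
      (((N : ℂ) ^ 2 - 1) / (12 * (N : ℂ) ^ 2)) *
        (deriv p z / p z - deriv q z / q z) ^ 2 := by
  have hpz : p z ≠ 0 := by
    rw [hp, Finset.prod_ne_zero_iff]
    intro k hk
    rw [Finset.mem_range] at hk
    exact sub_ne_zero.mpr (hz _ (by omega) (by omega))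
  have hqz : q z ≠ 0 := by
    rw [hq, Finset.prod_ne_zero_iff]
    intro k hk
    rw [Finset.mem_Icc] at hk
    exact sub_ne_zero.mpr (hz _ (by omega) (by omega))
  have hpa : AnalyticAt ℂ p z := by
    rw [funext hp]
    exact Finset.analyticAt_fun_prod _ fun k _ => analyticAt_id.sub analyticAt_const
  have hqa : AnalyticAt ℂ q z := by
    rw [funext hq]
    exact Finset.analyticAt_fun_prod _ fun k _ => analyticAt_id.sub analyticAt_const
  have hRa : AnalyticAt ℂ (fun w => (q w * p z) / (p w * q z)) z :=
    (hqa.mul analyticAt_const).div (hpa.mul analyticAt_const) (mul_ne_zero hpz hqz)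
  have hRz : (fun w => (q w * p z) / (p w * q z)) z = 1 := by
    simp only
    field_simp
  have hR' : deriv (fun w => (q w * p z) / (p w * q z)) z
      = deriv q z / q z - deriv p z / p z := by
    have := (hqa.differentiableAt.hasDerivAt.mul_const (p z)).fun_div
      (hpa.differentiableAt.hasDerivAt.mul_const (q z)) (mul_ne_zero hpz hqz)
    rw [this.deriv]
    field_simp
  have hN0 : (N : ℂ) ≠ 0 := by
    have : N ≠ 0 := by omega
    exact_mod_cast this
  have hac : ∀ s, ((a s : ℝ) : ℂ) = ((N : ℂ) - 1) / (2 * N) - (s : ℂ) * (N : ℂ)⁻¹ := by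
    intro s
    rw [ha]
    push_cast
    ring
  obtain ⟨h1, h2, h3⟩ := szego_aux_calc N (fun s => ((a s : ℝ) : ℂ)) _ z hRa hRz h₀ hh₀
  have S1 : ∑ s ∈ Finset.range N, ((a s : ℝ) : ℂ) = 0 := by
    simp only [hac]
    rw [szego_aux_sum1]
    field_simp
    ring
  have S2 : ∑ s ∈ Finset.range N, ((a s : ℝ) : ℂ) ^ 2 = ((N : ℂ) ^ 2 - 1) / (12 * N) := by
    simp only [hac]
    rw [szego_aux_sum2]
    field_simp
    ring
  refine ⟨?_, h1.deriv.differentiableAt, ?_, ?_, ?_⟩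
  · exact h1.eventually_analyticAt.mono fun w hw => hw.differentiableAt
  · have hRz' : (q z * p z) / (p z * q z) = 1 := hRz
    rw [hh₀, hRz']
    simp [hN0]
  · rw [h2, ← Finset.sum_mul, S1]
    simp
  · rw [h3]
    have : ∀ (x y : ℂ), ∑ s ∈ Finset.range N,
        (((a s : ℝ) : ℂ) * (((a s : ℝ) : ℂ) - 1) * x ^ 2 + ((a s : ℝ) : ℂ) * y)
        = (∑ s ∈ Finset.range N, ((a s : ℝ) : ℂ) ^ 2) * x ^ 2
          + (∑ s ∈ Finset.range N, ((a s : ℝ) : ℂ)) * (y - x ^ 2) := by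
      intro x y
      rw [Finset.sum_mul, Finset.sum_mul, ← Finset.sum_add_distrib]
      exact Finset.sum_congr rfl fun s _ => by ring
    rw [this, S1, S2, hR']
    field_simp
    ring
end

section
/- With the notation of the context, the function h₊ is (complex-)differentiable at z and satisfies h₊(z) = 1 and h₊'(z) = 0. (This is the algebraic content of the vanishing of the first-order term in the diagonal expansion of the Szegő kernel S[e_{m+1}] of Corollary 4.4, equivalently of the vanishing (4.24) of all first partial derivatives of θ[e_{m+1}] at 0.) -/
open Finset


lemma fract_shift (N : ℕ) (hN : 0 < N) (k : ℕ) :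
    ∑ s ∈ Finset.range N, Int.fract (((s + k : ℕ) : ℝ) / N) = ∑ s ∈ Finset.range N, (s : ℝ) / N := by
  have hN' : (0 : ℝ) < N := by exact_mod_cast hN
  induction k with
  | zero =>
    refine Finset.sum_congr rfl fun s hs => ?_
    rw [Int.fract_eq_self.2]
    · simp
    · have : (s : ℝ) < N := by exact_mod_cast Finset.mem_range.1 hs
      constructor
      · positivity
      · rw [div_lt_one hN']; simpa using this
  | succ k ih =>
    rw [← ih]
    have h1 := Finset.sum_range_succ (fun s : ℕ => Int.fract (((s + k : ℕ) : ℝ) / N)) N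
    have h2 := Finset.sum_range_succ' (fun s : ℕ => Int.fract (((s + k : ℕ) : ℝ) / N)) N
    have h3 : Int.fract (((N + k : ℕ) : ℝ) / N) = Int.fract (((0 + k : ℕ) : ℝ) / N) := by
      have : ((N + k : ℕ) : ℝ) / N = ((0 + k : ℕ) : ℝ) / N + 1 := by
        push_cast; field_simp; ring
      rw [this, Int.fract_add_one]
    have h4 : ∀ s : ℕ, s + (k + 1) = s + 1 + k := fun s => by ring
    simp only [h4]
    linarith

lemma sum_id_div (N : ℕ) (hN : 0 < N) :
    ∑ s ∈ Finset.range N, (((N : ℝ) - 1) / (2 * N) - (s : ℝ) / N) = 0 := by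
  have hN' : (0 : ℝ) < N := by exact_mod_cast hN
  have h : ∀ n : ℕ, ∑ s ∈ Finset.range n, (s : ℝ) = n * (n - 1) / 2 := by
    intro n
    induction n with
    | zero => simp
    | succ n ih => rw [Finset.sum_range_succ, ih]; push_cast; ring
  rw [Finset.sum_sub_distrib, ← Finset.sum_div (Finset.range N) (fun s : ℕ => (s : ℝ)), h]
  simp
  field_simp
  ring

lemma sum_fract (N : ℕ) (hN : 0 < N) (k : ℕ) :
    ∑ s ∈ Finset.range N, (((N : ℝ) - 1) / (2 * N) - Int.fract (((s + k : ℕ) : ℝ) / N)) = 0 := by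
  rw [Finset.sum_sub_distrib, fract_shift N hN, ← Finset.sum_sub_distrib, sum_id_div N hN]

lemma factor_deriv (z l : ℂ) (h : z ≠ l) (e : ℂ) :
    HasDerivAt (fun w : ℂ => ((z - l) / (w - l)) ^ e) (e * (-(z - l)⁻¹)) z := by
  have h0 : z - l ≠ 0 := sub_ne_zero.2 h
  have h1 : HasDerivAt (fun w : ℂ => (z - l) / (w - l)) (-(z - l)⁻¹) z := by
    have := (hasDerivAt_const z (z - l)).fun_div ((hasDerivAt_id z).sub_const l) h0
    refine this.congr_deriv ?_
    simp
    field_simp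
    ring
  have h2 := h1.cpow_const (c := e) (by simp [h0])
  refine h2.congr_deriv ?_
  simp [h0]

lemma prod_deriv {K : Type*} [DecidableEq K] (S : Finset K) (lam : K → ℂ) (z : ℂ)
    (hz : ∀ k, z ≠ lam k) (e : ℂ) :
    HasDerivAt (fun w : ℂ => ∏ i ∈ S, ((z - lam i) / (w - lam i)) ^ e)
      (e * ∑ i ∈ S, (-(z - lam i)⁻¹)) z := by
  have h := HasDerivAt.fun_finsetProd (u := S) (x := z)
    (fun i _ => factor_deriv z (lam i) (hz i) e)
  refine h.congr_deriv ?_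
  simp [sub_ne_zero.2 (hz _), Finset.mul_sum]

/-- Diagonal expansion of the algebraic Szegő kernel `S[e_{m+1}]`
(Corollary 4.4): the stripped kernel `hplus` satisfies `hplus z = 1` and
`hplus' z = 0`, which is the vanishing (4.24) of all first partial derivatives of
`θ[e_{m+1}]` at `0`. -/
theorem szego_em1_value_and_first_deriv
    {K : Type*} [Fintype K] [DecidableEq K]
    (N : ℕ) (hN : 2 ≤ N)
    (lam : K → ℂ) (hlam : Function.Injective lam)
    (I₁ I₂ J₁ J₂ : Finset K)
    (h12 : Disjoint I₁ I₂) (h1J1 : Disjoint I₁ J₁) (h1J2 : Disjoint I₁ J₂)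
    (h2J1 : Disjoint I₂ J₁) (h2J2 : Disjoint I₂ J₂) (hJ12 : Disjoint J₁ J₂)
    (istar jstar : K) (hij : istar ≠ jstar)
    (histar : istar ∉ I₁ ∪ I₂ ∪ J₁ ∪ J₂) (hjstar : jstar ∉ I₁ ∪ I₂ ∪ J₁ ∪ J₂)
    (z : ℂ) (hz : ∀ k, z ≠ lam k)
    (a b c : ℕ → ℝ)
    (ha : ∀ s, a s = ((N : ℝ) - 1) / (2 * N) - (s : ℝ) / N)
    (hb : ∀ s, b s = ((N : ℝ) - 1) / (2 * N) - Int.fract (((s : ℝ) + 1) / N))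
    (hc : ∀ s, c s = ((N : ℝ) - 1) / (2 * N) - Int.fract (((s : ℝ) + 2) / N))
    (hplus : ℂ → ℂ)
    (hh : ∀ w, hplus w = (N : ℂ)⁻¹ * ∑ s ∈ Finset.range N,
      (∏ i ∈ I₁, ((z - lam i) / (w - lam i)) ^ ((a s : ℝ) : ℂ)) *
      (∏ j ∈ J₂, ((z - lam j) / (w - lam j)) ^ ((-(a s) : ℝ) : ℂ)) *
      (∏ i ∈ I₂, ((z - lam i) / (w - lam i)) ^ ((b s : ℝ) : ℂ)) *
      (∏ j ∈ J₁, ((z - lam j) / (w - lam j)) ^ ((-(b s) : ℝ) : ℂ)) *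
      (((z - lam istar) / (w - lam istar)) ^ ((c s : ℝ) : ℂ)) *
      (((z - lam jstar) / (w - lam jstar)) ^ ((-(c s) : ℝ) : ℂ))) :
    hplus z = 1 ∧ HasDerivAt hplus 0 z := by
  have hN0 : 0 < N := by omega
  have hNC : (N : ℂ) ≠ 0 := by exact_mod_cast hN0.ne'
  have hz0 : ∀ k, z - lam k ≠ 0 := fun k => sub_ne_zero.2 (hz k)
  have sa : ∑ s ∈ Finset.range N, ((a s : ℝ) : ℂ) = 0 := by
    rw [← Complex.ofReal_sum]; simp only [ha]; rw [sum_id_div N hN0]; simp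
  have sb : ∑ s ∈ Finset.range N, ((b s : ℝ) : ℂ) = 0 := by
    have := sum_fract N hN0 1
    push_cast at this
    rw [← Complex.ofReal_sum]; simp only [hb]; rw [this]; simp
  have sc : ∑ s ∈ Finset.range N, ((c s : ℝ) : ℂ) = 0 := by
    have := sum_fract N hN0 2
    push_cast at this
    rw [← Complex.ofReal_sum]; simp only [hc]; rw [this]; simp
  refine ⟨?_, ?_⟩
  · rw [hh]
    simp [hz0, hNC]
  · rw [funext hh]
    have D := fun S e => prod_deriv S lam z hz e
    have F := fun k e => factor_deriv z (lam k) (hz k) e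
    have key := (HasDerivAt.fun_sum (u := Finset.range N) (fun s _ =>
      (((((D I₁ ((a s : ℝ) : ℂ)).fun_mul (D J₂ ((-(a s) : ℝ) : ℂ))).fun_mul
        (D I₂ ((b s : ℝ) : ℂ))).fun_mul (D J₁ ((-(b s) : ℝ) : ℂ))).fun_mul
        (F istar ((c s : ℝ) : ℂ))).fun_mul (F jstar ((-(c s) : ℝ) : ℂ)))).const_mul ((N : ℂ)⁻¹)
    refine key.congr_deriv ?_
    simp only [div_self (hz0 _), Complex.one_cpow, Finset.prod_const_one, mul_one, one_mul,
      Finset.sum_add_distrib, ← Finset.sum_mul, Complex.ofReal_neg, Finset.sum_neg_distrib,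
      sa, sb, sc]
    simp
end

section
/- Let N ≥ 2 be an integer and set a(s) = (N−1)/(2N) − s/N and c(s) = (N−1)/(2N) − frac((s+2)/N) for s = 0, …, N−1, where frac denotes the fractional part (so c(s) = a((s+2) mod N)). Then Σ_{s=0}^{N−1} c(s) = 0 and Σ_{s=0}^{N−1} a(s)·c(s) = (N²−12N+23)/(12N). -/
open Finset

theorem aux_sum_one (d : ℝ) (K : ℕ) :
    ∑ s ∈ Finset.range K, (d - (s : ℝ)) = d * K - (K : ℝ) * (K - 1) / 2 := by
  induction K with
  | zero => simp
  | succ k ih => rw [Finset.sum_range_succ, ih]; push_cast; ring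

theorem aux_sum_two (d e : ℝ) (K : ℕ) :
    ∑ s ∈ Finset.range K, (d - (s : ℝ)) * (e - (s : ℝ)) =
      d * e * K - (d + e) * ((K : ℝ) * (K - 1) / 2) + (K : ℝ) * (K - 1) * (2 * K - 1) / 6 := by
  induction K with
  | zero => simp
  | succ k ih => rw [Finset.sum_range_succ, ih]; push_cast; ring

/-- Correlation sums of the Szegő-kernel exponents `a(s)`, `c(s)` of
Theorem 4.3: `Σ c = 0` and `Σ a·c = (N²−12N+23)/(12N)`, producing the
coefficient of the cross term in `φ[e_{m+1}]` (Corollary 4.4) and exponents in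
the Thomae-type formula (Theorem 6.2). -/
theorem exponent_sums_ac
    (N : ℕ) (hN : 2 ≤ N) (a c : ℕ → ℝ)
    (ha : ∀ s, a s = ((N : ℝ) - 1) / (2 * N) - (s : ℝ) / N)
    (hc : ∀ s, c s = ((N : ℝ) - 1) / (2 * N) - Int.fract (((s : ℝ) + 2) / N)) :
    (∑ s ∈ Finset.range N, c s = 0) ∧
    (∑ s ∈ Finset.range N, a s * c s =
      ((N : ℝ) ^ 2 - 12 * N + 23) / (12 * N)) := by
  obtain ⟨M, rfl⟩ : ∃ M, N = M + 2 := ⟨N - 2, by omega⟩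
  have hM : (0 : ℝ) ≤ M := Nat.cast_nonneg M
  have hpos : (0 : ℝ) < M + 2 := by linarith
  have hne : (M : ℝ) + 2 ≠ 0 := hpos.ne'
  push_cast at ha hc ⊢
  have hc1 : ∀ s ∈ Finset.range M,
      c s = (((M : ℝ) + 1) / 2 - 2 - s) / (M + 2) := by
    intro s hs
    have hs' : (s : ℝ) < M := by exact_mod_cast Finset.mem_range.mp hs
    have hf : Int.fract (((s : ℝ) + 2) / (M + 2)) = ((s : ℝ) + 2) / (M + 2) := by
      rw [Int.fract_eq_self]
      exact ⟨by positivity, by rw [div_lt_one hpos]; linarith⟩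
    rw [hc, hf]
    field_simp
    ring
  have hc2 : c M = (((M : ℝ) + 1) / 2) / (M + 2) := by
    rw [hc, div_self hne, Int.fract_one]
    field_simp
    ring
  have hc3 : c (M + 1) = (((M : ℝ) + 1) / 2 - 1) / (M + 2) := by
    have hf : Int.fract ((((M + 1 : ℕ) : ℝ) + 2) / (M + 2)) = 1 / ((M : ℝ) + 2) := by
      rw [Int.fract_eq_iff]
      refine ⟨by positivity, by rw [div_lt_one hpos]; linarith, 1, ?_⟩
      push_cast
      field_simp
      ring
    rw [hc, hf]
    field_simp
    ring
  have ha1 : ∀ s, a s = (((M : ℝ) + 1) / 2 - s) / (M + 2) := by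
    intro s
    rw [ha]
    field_simp
    ring
  constructor
  · rw [Finset.sum_range_succ, Finset.sum_range_succ, Finset.sum_congr rfl hc1,
      ← Finset.sum_div, aux_sum_one, hc2, hc3]
    field_simp
    ring
  · have hs : ∀ s ∈ Finset.range M, a s * c s =
        ((((M : ℝ) + 1) / 2 - s) * (((M : ℝ) + 1) / 2 - 2 - s)) / (M + 2) ^ 2 := by
      intro s hs
      rw [ha1, hc1 s hs]
      field_simp
    rw [Finset.sum_range_succ, Finset.sum_range_succ, Finset.sum_congr rfl hs,
      ← Finset.sum_div, aux_sum_two, hc2, hc3, ha1, ha1]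
    push_cast
    field_simp
    ring
end
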